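/- arXiv:2502.15744 — 3 statements merged into one kernel-verified Lean document; each statement's English description precedes it below -/
import Mathlib

section
/- For k ∈ (0,2), the function |x|^k admits the integral representation |x|^k = c(k) ∫₀^∞ (1 - e^{-x²t²}) t^{-(k+1)} dt, where c(k) = k / Γ(1 - k/2). -/
open Real MeasureTheory

/-! The substitution `u = x ^ 2 * t ^ 2` turns the integral into `|x| ^ k / 2` times
`∫ u in Ioi 0, u ^ (-s - 1) * (1 - exp (-u))` with `s = k / 2`. Since `1 - exp (-u)` is `O(u)` at
`0` and bounded at infinity, the latter converges for `0 < s < 1`; integrating the power of `u` by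
parts turns it into `s⁻¹ * ∫ u in Ioi 0, exp (-u) * u ^ (-s)`, a Gamma integral. -/

open Set Filter Topology Asymptotics

theorem isBigO_one_sub_exp_neg_nhds_zero :
    (fun u : ℝ => 1 - exp (-u)) =O[𝓝 0] fun u => u := by
  have hdiff : DifferentiableAt ℝ (fun u : ℝ => 1 - exp (-u)) 0 := by fun_prop
  simpa using hdiff.isBigO_sub

theorem isBigO_one_sub_exp_neg_atTop :
    (fun u : ℝ => 1 - exp (-u)) =O[atTop] fun _ => (1 : ℝ) :=
  (tendsto_const_nhds.sub tendsto_exp_neg_atTop_nhds_zero).isBigO_one ℝ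

theorem integrableOn_rpow_mul_one_sub_exp_neg {s : ℝ} (hs₀ : 0 < s) (hs₁ : s < 1) :
    IntegrableOn (fun u : ℝ => u ^ (-s - 1) * (1 - exp (-u))) (Ioi 0) := by
  have hcont : Continuous fun u : ℝ => 1 - exp (-u) := by fun_prop
  refine mellin_convergent_of_isBigO_scalar (a := 0) (b := -1)
    (hcont.locallyIntegrable.locallyIntegrableOn _) ?_ (by linarith) ?_ (by linarith)
  · simpa only [neg_zero, rpow_zero] using isBigO_one_sub_exp_neg_atTop
  · simpa only [neg_neg, rpow_one] using
      isBigO_one_sub_exp_neg_nhds_zero.mono nhdsWithin_le_nhds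

theorem tendsto_one_sub_exp_neg_mul_rpow_nhdsGT_zero {s : ℝ} (hs : s < 1) :
    Tendsto (fun u : ℝ => (1 - exp (-u)) * u ^ (-s)) (𝓝[>] 0) (𝓝 0) := by
  have hbound : (fun u : ℝ => (1 - exp (-u)) * u ^ (-s)) =O[𝓝[>] 0] fun u => u * u ^ (-s) :=
    (isBigO_one_sub_exp_neg_nhds_zero.mono nhdsWithin_le_nhds).mul (isBigO_refl _ _)
  have hpow : (fun u : ℝ => u ^ (1 - s)) =ᶠ[𝓝[>] 0] fun u => u * u ^ (-s) := by
    filter_upwards [self_mem_nhdsWithin] with u (hu : 0 < u)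
    rw [sub_eq_add_neg, rpow_add hu, rpow_one]
  exact hbound.trans_tendsto <| Tendsto.congr' hpow <|
    (tendsto_nhdsWithin_of_tendsto_nhds tendsto_id).rpow_const_nhds_zero (sub_pos.2 hs)

theorem tendsto_one_sub_exp_neg_mul_rpow_atTop {s : ℝ} (hs : 0 < s) :
    Tendsto (fun u : ℝ => (1 - exp (-u)) * u ^ (-s)) atTop (𝓝 0) :=
  (isBigO_one_sub_exp_neg_atTop.mul (isBigO_refl _ _)).trans_tendsto <| by
    simpa only [one_mul] using tendsto_rpow_neg_atTop hs

theorem integral_rpow_mul_one_sub_exp_neg {s : ℝ} (hs₀ : 0 < s) (hs₁ : s < 1) :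
    ∫ u in Ioi (0 : ℝ), u ^ (-s - 1) * (1 - exp (-u)) = Gamma (1 - s) / s := by
  have hexp : ∀ u ∈ Ioi (0 : ℝ), HasDerivAt (fun u => 1 - exp (-u)) (exp (-u)) u := fun u _ => by
    simpa using (hasDerivAt_neg u).exp.const_sub 1
  have hpow : ∀ u ∈ Ioi (0 : ℝ), HasDerivAt (fun u => u ^ (-s)) (-s * u ^ (-s - 1)) u :=
    fun u hu => hasDerivAt_rpow_const (Or.inl (ne_of_gt hu))
  have hswap (u : ℝ) :
      (1 - exp (-u)) * (-s * u ^ (-s - 1)) = -s * (u ^ (-s - 1) * (1 - exp (-u))) := by ring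
  have hparts :
      ∫ u in Ioi (0 : ℝ), (1 - exp (-u)) * (-s * u ^ (-s - 1)) =
        0 - 0 - ∫ u in Ioi (0 : ℝ), exp (-u) * u ^ (-s) := by
    refine integral_Ioi_mul_deriv_eq_deriv_mul hexp hpow ?_ ?_
      (tendsto_one_sub_exp_neg_mul_rpow_nhdsGT_zero hs₁)
      (tendsto_one_sub_exp_neg_mul_rpow_atTop hs₀)
    · simpa only [IntegrableOn, Pi.mul_def, hswap] using
        (integrableOn_rpow_mul_one_sub_exp_neg hs₀ hs₁).const_mul (-s)
    · simpa only [Pi.mul_def, sub_sub_cancel_left] using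
        GammaIntegral_convergent (sub_pos.2 hs₁)
  have hGamma : Gamma (1 - s) = ∫ u in Ioi (0 : ℝ), exp (-u) * u ^ (-s) := by
    simpa only [sub_sub_cancel_left] using Gamma_eq_integral (sub_pos.2 hs₁)
  simp only [hswap, integral_const_mul, ← hGamma] at hparts
  rw [eq_div_iff hs₀.ne']
  linarith

theorem integral_rpow_smul_comp_mul_rpow {E : Type*} [NormedAddCommGroup E] [NormedSpace ℝ E]
    (g : ℝ → E) (q : ℝ) {p b : ℝ} (hp : 0 < p) (hb : 0 < b) :
    ∫ t in Ioi (0 : ℝ), t ^ (q - 1) • g (b * t ^ p) =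
      (b ^ (-(q / p)) / p) • ∫ u in Ioi (0 : ℝ), u ^ (q / p - 1) • g u := by
  calc
    _ = ∫ t in Ioi (0 : ℝ), (p * t ^ (p - 1)) • p⁻¹ • (t ^ p) ^ (q / p - 1) • g (b * t ^ p) := by
      refine setIntegral_congr_fun measurableSet_Ioi fun t (ht : 0 < t) => ?_
      have hpow : t ^ (q - 1) = t ^ (p - 1) * (t ^ p) ^ (q / p - 1) := by
        rw [← rpow_mul ht.le, ← rpow_add ht]
        congr 1
        field_simp
        ring
      simp only [smul_smul, hpow]
      congr 1
      field_simp
    _ = ∫ y in Ioi (0 : ℝ), p⁻¹ • y ^ (q / p - 1) • g (b * y) :=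
      integral_comp_rpow_Ioi_of_pos (g := fun y => p⁻¹ • y ^ (q / p - 1) • g (b * y)) hp
    _ = ∫ y in Ioi (0 : ℝ), (p⁻¹ * b ^ (1 - q / p)) • (b * y) ^ (q / p - 1) • g (b * y) := by
      refine setIntegral_congr_fun measurableSet_Ioi fun y (hy : 0 < y) => ?_
      have hcancel : b ^ (1 - q / p) * b ^ (q / p - 1) = 1 := by
        rw [← rpow_add hb, sub_add_sub_cancel, sub_self, rpow_zero]
      simp only [smul_smul, mul_rpow hb.le hy.le]
      congr 1
      linear_combination -(p⁻¹ * y ^ (q / p - 1)) * hcancel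
    _ = (b ^ (-(q / p)) / p) • ∫ u in Ioi (0 : ℝ), u ^ (q / p - 1) • g u := by
      rw [integral_smul, integral_comp_mul_left_Ioi (fun u => u ^ (q / p - 1) • g u) 0 hb,
        mul_zero, smul_smul, sub_eq_add_neg, rpow_add hb, rpow_one]
      congr 1
      field_simp

theorem integral_rpow_mul_one_sub_exp_neg_mul_rpow {p q b : ℝ} (hq : 0 < q) (hqp : q < p)
    (hb : 0 ≤ b) :
    ∫ t in Ioi (0 : ℝ), t ^ (-q - 1) * (1 - exp (-(b * t ^ p))) =
      b ^ (q / p) * Gamma (1 - q / p) / q := by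
  have hp : 0 < p := hq.trans hqp
  have hs : 0 < q / p := div_pos hq hp
  rcases hb.eq_or_lt with rfl | hb
  · simp [zero_rpow hs.ne']
  have hscale := integral_rpow_smul_comp_mul_rpow (fun u => 1 - exp (-u)) (-q) hp hb
  simp only [smul_eq_mul, neg_div, neg_neg] at hscale
  rw [hscale, integral_rpow_mul_one_sub_exp_neg hs ((div_lt_one hp).2 hqp)]
  field_simp

theorem abs_rpow_integral_repr (k : ℝ) (hk : k ∈ Set.Ioo (0:ℝ) 2) (x : ℝ) :
    |x| ^ k = (k / Real.Gamma (1 - k / 2)) *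
      ∫ t in Set.Ioi (0:ℝ), (1 - Real.exp (-(x ^ 2 * t ^ 2))) / t ^ (k + 1) := by
  obtain ⟨hk₀, hk₂⟩ := hk
  have hintegrand : EqOn (fun t : ℝ => (1 - exp (-(x ^ 2 * t ^ 2))) / t ^ (k + 1))
      (fun t => t ^ (-k - 1) * (1 - exp (-(x ^ 2 * t ^ (2 : ℝ))))) (Ioi 0) :=
    fun t (ht : 0 < t) => by
      simp only [rpow_two, ← neg_add', rpow_neg ht.le, div_eq_inv_mul]
  have hpow : (x ^ 2) ^ (k / 2) = |x| ^ k := by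
    rw [← sq_abs, ← rpow_two, ← rpow_mul (abs_nonneg x), mul_div_cancel₀ k two_ne_zero]
  have hGamma : Gamma (1 - k / 2) ≠ 0 := (Gamma_pos_of_pos (by linarith)).ne'
  rw [setIntegral_congr_fun measurableSet_Ioi hintegrand,
    integral_rpow_mul_one_sub_exp_neg_mul_rpow hk₀ hk₂ (sq_nonneg x), hpow]
  field_simp [hGamma]
end

section
/- For k ∈ (0,2), for every compactly supported signed Borel measure μ on ℝ with μ(ℝ) = 0 and μ ≠ 0, we have ∫∫ |x - y|^k μ(dx) μ(dy) < 0. -/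
open Real MeasureTheory

/-!
For `k ∈ (0, 2)`, rotation invariance and homogeneity of Lebesgue measure on a `d`-dimensional
Euclidean space `E` give a constant `c > 0` with
`c ‖x‖ ^ k = ∫ (1 - cos ⟪x, ξ⟫) ‖ξ‖ ^ (-(d + k)) dξ` for all `x`. Integrate this against
`(P - N) ⊗ (P - N)`: the constant `1` contributes nothing because `P - N` has total mass zero, and
the cosine becomes the squared modulus of the characteristic function, so the energy of `P - N` is
`-c⁻¹ ∫ ‖charFun P ξ - charFun N ξ‖ ^ 2 ‖ξ‖ ^ (-(d + k)) dξ`. This is negative, since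
characteristic functions are continuous and determine the measure.
-/

section Riesz

open Module (finrank)
open scoped RealInnerProductSpace ComplexConjugate

lemma integral_mul_norm_rpow_pos {E : Type*} [NormedAddCommGroup E] [MeasurableSpace E]
    {μ : Measure E} [μ.IsOpenPosMeasure] {g : E → ℝ} {s : ℝ} (hg : Continuous g) (hg_nonneg : 0 ≤ g)
    (hg_zero : g 0 = 0) (hg_ne : g ≠ 0) (hint : Integrable (fun ξ ↦ g ξ * ‖ξ‖ ^ s) μ) :
    0 < ∫ ξ, g ξ * ‖ξ‖ ^ s ∂μ := by
  have hsupp : Function.support g ⊆ Function.support fun ξ ↦ g ξ * ‖ξ‖ ^ s := fun ξ hξ ↦ by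
    have hξ_ne : ξ ≠ 0 := fun h ↦ hξ (h ▸ hg_zero)
    exact mul_ne_zero hξ (rpow_pos_of_pos (norm_pos_iff.2 hξ_ne) s).ne'
  rw [integral_pos_iff_support_of_nonneg
    (fun ξ ↦ mul_nonneg (hg_nonneg ξ) (rpow_nonneg (norm_nonneg ξ) s)) hint]
  exact (hg.isOpen_support.measure_pos μ (Function.support_nonempty_iff.2 hg_ne)).trans_le
    (measure_mono hsupp)

lemma memLp_id_of_isBounded {E : Type*} [NormedAddCommGroup E] [SecondCountableTopology E]
    [MeasurableSpace E] [OpensMeasurableSpace E] {μ : Measure E} [IsFiniteMeasure μ] {s : Set E}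
    (hs : Bornology.IsBounded s) (hμ : μ sᶜ = 0) (p : ENNReal) : MemLp id p μ := by
  obtain ⟨C, hC⟩ := hs.exists_norm_le
  exact .of_bound aestronglyMeasurable_id C (Filter.Eventually.mono hμ hC)

lemma integrable_norm_sub_rpow {E : Type*} [NormedAddCommGroup E] [MeasurableSpace E]
    {A B : Measure E} [IsFiniteMeasure A] [IsFiniteMeasure B] {k : ℝ} (hk : 0 < k)
    (hA : MemLp id (ENNReal.ofReal k) A) (hB : MemLp id (ENNReal.ofReal k) B) :
    Integrable (fun p : E × E ↦ ‖p.1 - p.2‖ ^ k) (A.prod B) := by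
  have hsub : MemLp (fun p : E × E ↦ p.1 - p.2) (ENNReal.ofReal k) (A.prod B) :=
    (hA.comp_fst B).sub (hB.comp_snd A)
  simpa [ENNReal.toReal_ofReal hk.le] using hsub.integrable_norm_rpow (by simpa using hk) (by simp)

variable {E : Type*} [NormedAddCommGroup E] [InnerProductSpace ℝ E]

/-- The spectral density `‖ξ‖ ^ (-(d + k))` of the Riesz kernel `-‖x‖ ^ k` on a `d`-dimensional
space, up to a constant factor. Its value at the singularity `ξ = 0` is irrelevant: the functions
it multiplies vanish there. -/
noncomputable def rieszWeight (k : ℝ) (ξ : E) : ℝ := ‖ξ‖ ^ (-(finrank ℝ E + k))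

lemma rieszWeight_nonneg (k : ℝ) (ξ : E) : 0 ≤ rieszWeight k ξ := rpow_nonneg (norm_nonneg ξ) _

lemma rieszWeight_smul (k : ℝ) {r : ℝ} (hr : 0 ≤ r) (ξ : E) :
    rieszWeight k (r • ξ) = r ^ (-(finrank ℝ E + k)) * rieszWeight k ξ := by
  rw [rieszWeight, rieszWeight, norm_smul, norm_of_nonneg hr, mul_rpow hr (norm_nonneg ξ)]

variable [MeasurableSpace E]

/-- The mutual energy `∫∫ ‖x - y‖ ^ k dA(x) dB(y)`. -/
noncomputable def rieszEnergy (k : ℝ) (A B : Measure E) : ℝ := ∫ x, ∫ y, ‖x - y‖ ^ k ∂B ∂A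

/-- The mutual energy of two measures for the bounded kernel `1 - cos ⟪x - y, ξ⟫`, that is, the
contribution of the frequency `ξ` to their Riesz energy. -/
noncomputable def cosEnergy (ξ : E) (A B : Measure E) : ℝ :=
  ∫ p : E × E, (1 - cos ⟪p.1 - p.2, ξ⟫) ∂A.prod B

lemma charFun_mul_conj_charFun (A B : Measure E) [SFinite A] [SFinite B] (ξ : E) :
    charFun A ξ * conj (charFun B ξ)
      = ∫ p : E × E, Complex.exp (⟪p.1 - p.2, ξ⟫ * Complex.I) ∂A.prod B := by
  rw [← charFun_neg, charFun_apply, charFun_apply, ← integral_prod_mul]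
  refine integral_congr_ae (.of_forall fun p ↦ ?_)
  simp only [← Complex.exp_add, inner_sub_left, inner_neg_right]
  push_cast
  ring_nf

variable [BorelSpace E]

@[fun_prop]
lemma measurable_rieszWeight (k : ℝ) : Measurable (rieszWeight k : E → ℝ) := by
  unfold rieszWeight
  fun_prop

section CosEnergy

variable [SecondCountableTopology E]

lemma cosEnergy_eq_sub_re_charFun_mul_conj (A B : Measure E) [IsFiniteMeasure A]
    [IsFiniteMeasure B] (ξ : E) :
    cosEnergy ξ A B
      = A.real Set.univ * B.real Set.univ - (charFun A ξ * conj (charFun B ξ)).re := by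
  have hexp : Integrable (fun p : E × E ↦ Complex.exp (⟪p.1 - p.2, ξ⟫ * Complex.I)) (A.prod B) :=
    .of_bound (by fun_prop) 1 (.of_forall fun _ ↦ (Complex.norm_exp_ofReal_mul_I _).le)
  have hcos : Integrable (fun p : E × E ↦ cos ⟪p.1 - p.2, ξ⟫) (A.prod B) := by
    simpa only [RCLike.re_eq_complex_re, Complex.exp_ofReal_mul_I_re] using hexp.re
  have hre : (charFun A ξ * conj (charFun B ξ)).re = ∫ p : E × E, cos ⟪p.1 - p.2, ξ⟫ ∂A.prod B := by
    rw [charFun_mul_conj_charFun, ← Complex.reCLM_apply, ← Complex.reCLM.integral_comp_comm hexp]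
    simp only [Complex.reCLM_apply, Complex.exp_ofReal_mul_I_re]
  rw [hre, cosEnergy, integral_sub (integrable_const _) hcos, integral_const, smul_eq_mul, mul_one,
    ← Set.univ_prod_univ, measureReal_prod_prod]

lemma norm_charFun_sub_sq_eq_cosEnergy {P N : Measure E} [IsFiniteMeasure P] [IsFiniteMeasure N]
    (hbal : P Set.univ = N Set.univ) (ξ : E) :
    ‖charFun P ξ - charFun N ξ‖ ^ 2
      = 2 * cosEnergy ξ P N - cosEnergy ξ P P - cosEnergy ξ N N := by
  have hmass : P.real Set.univ = N.real Set.univ := congrArg ENNReal.toReal hbal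
  simp only [cosEnergy_eq_sub_re_charFun_mul_conj, hmass, Complex.mul_conj, Complex.ofReal_re,
    Complex.sq_norm, Complex.normSq_sub]
  ring

end CosEnergy

variable [FiniteDimensional ℝ E]

section Kernel

variable {k : ℝ}

lemma integrableOn_ball_one_sub_cos_mul_rieszWeight (hk : k < 2) {x : E} (hx : x ≠ 0) :
    IntegrableOn (fun ξ ↦ (1 - cos ⟪x, ξ⟫) * rieszWeight k ξ) (Metric.ball 0 1) := by
  have : Nontrivial E := ⟨x, 0, hx⟩
  refine integrableOn_ball_of_norm_le_rpow (C := ‖x‖ ^ 2 / 2) (α := finrank ℝ E + k - 2)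
    Module.finrank_pos (by linarith) (.of_forall fun ξ ↦ ?_) (by fun_prop)
  rcases eq_or_ne ξ 0 with rfl | hξ
  · simpa using by positivity
  have hcos : 1 - cos ⟪x, ξ⟫ ≤ ‖x‖ ^ 2 / 2 * ‖ξ‖ ^ 2 :=
    calc 1 - cos ⟪x, ξ⟫ ≤ ⟪x, ξ⟫ ^ 2 / 2 := by linarith [one_sub_sq_div_two_le_cos (x := ⟪x, ξ⟫)]
      _ ≤ (‖x‖ * ‖ξ‖) ^ 2 / 2 := by
        gcongr ?_ / 2
        exact sq_le_sq' (neg_le_of_abs_le (abs_real_inner_le_norm x ξ)) (real_inner_le_norm x ξ)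
      _ = ‖x‖ ^ 2 / 2 * ‖ξ‖ ^ 2 := by ring
  have hpow : ‖ξ‖ ^ 2 * rieszWeight k ξ = ‖ξ‖ ^ (-(finrank ℝ E + k - 2)) := by
    rw [rieszWeight, ← rpow_natCast, ← rpow_add (norm_pos_iff.2 hξ)]
    congr 1
    push_cast
    ring
  rw [norm_of_nonneg (mul_nonneg (sub_nonneg.2 (cos_le_one _)) (rieszWeight_nonneg k ξ)), ← hpow,
    ← mul_assoc]
  exact mul_le_mul_of_nonneg_right hcos (rieszWeight_nonneg k ξ)

lemma integrableOn_compl_ball_rieszWeight (hk : 0 < k) :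
    IntegrableOn (rieszWeight k : E → ℝ) (Metric.ball 0 1)ᶜ := by
  have hexponent : (finrank ℝ E : ℝ) < finrank ℝ E + k := by linarith
  refine ((integrable_one_add_norm (μ := volume) hexponent).const_mul
    (2 ^ (finrank ℝ E + k))).integrableOn.mono' (by fun_prop) ?_
  filter_upwards [ae_restrict_mem measurableSet_ball.compl] with ξ hξ
  have hξ : 1 ≤ ‖ξ‖ := by simpa using hξ
  rw [norm_of_nonneg (rieszWeight_nonneg k ξ)]
  calc rieszWeight k ξ = 2 ^ (finrank ℝ E + k) * (2 * ‖ξ‖) ^ (-(finrank ℝ E + k)) := by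
        rw [mul_rpow zero_le_two (norm_nonneg ξ), ← mul_assoc, ← rpow_add zero_lt_two,
          add_neg_cancel, rpow_zero, one_mul, rieszWeight]
    _ ≤ 2 ^ (finrank ℝ E + k) * (1 + ‖ξ‖) ^ (-(finrank ℝ E + k)) := by
        refine mul_le_mul_of_nonneg_left ?_ (by positivity)
        exact rpow_le_rpow_of_nonpos (by positivity) (by linarith) (neg_nonpos.2 (by positivity))

lemma integrable_one_sub_cos_mul_rieszWeight (hk : k ∈ Set.Ioo 0 2) (x : E) :
    Integrable fun ξ ↦ (1 - cos ⟪x, ξ⟫) * rieszWeight k ξ := by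
  rcases eq_or_ne x 0 with rfl | hx
  · simp
  rw [← integrableOn_univ, ← Set.union_compl_self (Metric.ball (0 : E) 1)]
  refine (integrableOn_ball_one_sub_cos_mul_rieszWeight hk.2 hx).union ?_
  refine (integrableOn_compl_ball_rieszWeight hk.1).bdd_mul (c := 2) (by fun_prop)
    (.of_forall fun ξ ↦ ?_)
  rw [norm_of_nonneg (sub_nonneg.2 (cos_le_one _))]
  linarith [neg_one_le_cos ⟪x, ξ⟫]

lemma integral_one_sub_cos_mul_rieszWeight_pos (hk : k ∈ Set.Ioo 0 2) {x : E} (hx : x ≠ 0) :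
    0 < ∫ ξ, (1 - cos ⟪x, ξ⟫) * rieszWeight k ξ := by
  refine integral_mul_norm_rpow_pos (by fun_prop) (fun ξ ↦ sub_nonneg.2 (cos_le_one _)) (by simp)
    (fun h ↦ ?_) (integrable_one_sub_cos_mul_rieszWeight hk x)
  have hinner : ⟪x, (π / ‖x‖ ^ 2) • x⟫ = π := by
    rw [inner_smul_right, real_inner_self_eq_norm_sq, div_mul_cancel₀ _ (by positivity)]
  have h_zero : 1 - cos ⟪x, (π / ‖x‖ ^ 2) • x⟫ = 0 := congrFun h _
  norm_num [hinner] at h_zero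

lemma integral_one_sub_cos_smul_mul_rieszWeight (k : ℝ) {r : ℝ} (hr : 0 < r) (x : E) :
    ∫ ξ, (1 - cos ⟪r • x, ξ⟫) * rieszWeight k ξ
      = r ^ k * ∫ ξ, (1 - cos ⟪x, ξ⟫) * rieszWeight k ξ := by
  have hscale (ξ : E) : (1 - cos ⟪r • x, ξ⟫) * rieszWeight k ξ
      = r ^ (finrank ℝ E + k) * ((1 - cos ⟪x, r • ξ⟫) * rieszWeight k (r • ξ)) := by
    rw [rieszWeight_smul k hr.le, real_inner_smul_left, real_inner_smul_right, rpow_neg hr.le]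
    field_simp
  simp only [hscale]
  rw [integral_const_mul, Measure.integral_comp_smul volume
    (fun ξ ↦ (1 - cos ⟪x, ξ⟫) * rieszWeight k ξ), smul_eq_mul, ← mul_assoc,
    abs_of_pos (by positivity), rpow_add hr, rpow_natCast]
  field_simp

lemma integral_one_sub_cos_mul_rieszWeight_congr_norm (k : ℝ) {x y : E} (h : ‖x‖ = ‖y‖) :
    ∫ ξ, (1 - cos ⟪x, ξ⟫) * rieszWeight k ξ = ∫ ξ, (1 - cos ⟪y, ξ⟫) * rieszWeight k ξ := by
  set R : E ≃ₗᵢ[ℝ] E := (ℝ ∙ (x - y))ᗮ.reflection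
  have hR : R x = y := Submodule.reflection_sub h
  rw [← R.measurePreserving.integral_comp R.toHomeomorph.measurableEmbedding
    fun ξ ↦ (1 - cos ⟪y, ξ⟫) * rieszWeight k ξ]
  simp only [← hR, rieszWeight, R.inner_map_map, R.norm_map]

variable (E) in
lemma exists_integral_one_sub_cos_mul_rieszWeight_eq (hk : k ∈ Set.Ioo 0 2) :
    ∃ c > 0, ∀ x : E, ∫ ξ, (1 - cos ⟪x, ξ⟫) * rieszWeight k ξ = c * ‖x‖ ^ k := by
  rcases subsingleton_or_nontrivial E with _ | _
  · exact ⟨1, one_pos, fun x ↦ by simp [Subsingleton.elim x 0, zero_rpow hk.1.ne']⟩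
  obtain ⟨e, he⟩ := exists_norm_eq E zero_le_one
  refine ⟨∫ ξ, (1 - cos ⟪e, ξ⟫) * rieszWeight k ξ,
    integral_one_sub_cos_mul_rieszWeight_pos hk (norm_pos_iff.1 (by simp [he])), fun x ↦ ?_⟩
  rcases eq_or_ne x 0 with rfl | hx
  · simp [zero_rpow hk.1.ne']
  rw [integral_one_sub_cos_mul_rieszWeight_congr_norm k
      (show ‖x‖ = ‖‖x‖ • e‖ by simp [norm_smul, he]),
    integral_one_sub_cos_smul_mul_rieszWeight k (norm_pos_iff.2 hx), mul_comm]

end Kernel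

section Energy

variable {k : ℝ} {A B : Measure E} [IsFiniteMeasure A] [IsFiniteMeasure B]

lemma integrable_prod_one_sub_cos_mul_rieszWeight (hk : k ∈ Set.Ioo 0 2)
    (hA : MemLp id (ENNReal.ofReal k) A) (hB : MemLp id (ENNReal.ofReal k) B) :
    Integrable (fun q : (E × E) × E ↦ (1 - cos ⟪q.1.1 - q.1.2, q.2⟫) * rieszWeight k q.2)
      ((A.prod B).prod volume) := by
  obtain ⟨c, -, hc⟩ := exists_integral_one_sub_cos_mul_rieszWeight_eq E hk
  rw [integrable_prod_iff (by fun_prop)]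
  refine ⟨.of_forall fun p ↦ integrable_one_sub_cos_mul_rieszWeight hk (p.1 - p.2), ?_⟩
  have hnorm (x ξ : E) :
      ‖(1 - cos ⟪x, ξ⟫) * rieszWeight k ξ‖ = (1 - cos ⟪x, ξ⟫) * rieszWeight k ξ :=
    norm_of_nonneg (mul_nonneg (sub_nonneg.2 (cos_le_one _)) (rieszWeight_nonneg k ξ))
  simp only [hnorm, hc]
  exact (integrable_norm_sub_rpow hk.1 hA hB).const_mul c

lemma integrable_cosEnergy_mul_rieszWeight (hk : k ∈ Set.Ioo 0 2)
    (hA : MemLp id (ENNReal.ofReal k) A) (hB : MemLp id (ENNReal.ofReal k) B) :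
    Integrable fun ξ ↦ cosEnergy ξ A B * rieszWeight k ξ := by
  simp only [cosEnergy, ← integral_mul_const]
  exact (integrable_prod_one_sub_cos_mul_rieszWeight hk hA hB).integral_prod_right

variable (E) in
lemma exists_mul_rieszEnergy_eq_integral_cosEnergy (hk : k ∈ Set.Ioo 0 2) :
    ∃ c > 0, ∀ (A B : Measure E) [IsFiniteMeasure A] [IsFiniteMeasure B],
      MemLp id (ENNReal.ofReal k) A → MemLp id (ENNReal.ofReal k) B →
      c * rieszEnergy k A B = ∫ ξ, cosEnergy ξ A B * rieszWeight k ξ := by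
  obtain ⟨c, hc_pos, hc⟩ := exists_integral_one_sub_cos_mul_rieszWeight_eq E hk
  refine ⟨c, hc_pos, fun A B _ _ hA hB ↦ ?_⟩
  calc c * rieszEnergy k A B = ∫ p : E × E, c * ‖p.1 - p.2‖ ^ k ∂A.prod B := by
        rw [rieszEnergy, ← integral_prod _ (integrable_norm_sub_rpow hk.1 hA hB),
          integral_const_mul]
    _ = ∫ p : E × E, (∫ ξ, (1 - cos ⟪p.1 - p.2, ξ⟫) * rieszWeight k ξ) ∂A.prod B := by
        simp only [hc]
    _ = ∫ ξ, (∫ p : E × E, (1 - cos ⟪p.1 - p.2, ξ⟫) * rieszWeight k ξ ∂A.prod B) :=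
        integral_integral_swap (integrable_prod_one_sub_cos_mul_rieszWeight hk hA hB)
    _ = ∫ ξ, cosEnergy ξ A B * rieszWeight k ξ := by simp only [integral_mul_const, cosEnergy]

variable {P N : Measure E} [IsFiniteMeasure P] [IsFiniteMeasure N]

lemma integrable_norm_charFun_sub_sq_mul_rieszWeight (hk : k ∈ Set.Ioo 0 2)
    (hP : MemLp id (ENNReal.ofReal k) P) (hN : MemLp id (ENNReal.ofReal k) N)
    (hbal : P Set.univ = N Set.univ) :
    Integrable fun ξ ↦ ‖charFun P ξ - charFun N ξ‖ ^ 2 * rieszWeight k ξ := by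
  simp only [norm_charFun_sub_sq_eq_cosEnergy hbal, sub_mul, mul_assoc]
  exact (((integrable_cosEnergy_mul_rieszWeight hk hP hN).const_mul 2).sub
    (integrable_cosEnergy_mul_rieszWeight hk hP hP)).sub
    (integrable_cosEnergy_mul_rieszWeight hk hN hN)

lemma exists_mul_rieszEnergy_sub_eq_integral_norm_charFun_sub_sq (hk : k ∈ Set.Ioo 0 2)
    (hP : MemLp id (ENNReal.ofReal k) P) (hN : MemLp id (ENNReal.ofReal k) N)
    (hbal : P Set.univ = N Set.univ) :
    ∃ c > 0, c * (2 * rieszEnergy k P N - rieszEnergy k P P - rieszEnergy k N N)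
      = ∫ ξ, ‖charFun P ξ - charFun N ξ‖ ^ 2 * rieszWeight k ξ := by
  obtain ⟨c, hc_pos, hc⟩ := exists_mul_rieszEnergy_eq_integral_cosEnergy E hk
  refine ⟨c, hc_pos, ?_⟩
  have hPN := (integrable_cosEnergy_mul_rieszWeight hk hP hN).const_mul 2
  have hPP := integrable_cosEnergy_mul_rieszWeight hk hP hP
  have hNN := integrable_cosEnergy_mul_rieszWeight hk hN hN
  simp only [norm_charFun_sub_sq_eq_cosEnergy hbal, sub_mul, mul_assoc]
  rw [integral_sub (hPN.sub' hPP) hNN, integral_sub hPN hPP, integral_const_mul, ← hc P N hP hN,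
    ← hc P P hP hP, ← hc N N hN hN]
  ring

end Energy

theorem riesz_energy_neg_of_balanced_general {E : Type*} [NormedAddCommGroup E]
    [InnerProductSpace ℝ E] [FiniteDimensional ℝ E] [MeasurableSpace E] [BorelSpace E] {k : ℝ}
    (hk : k ∈ Set.Ioo 0 2) {P N : Measure E} [IsFiniteMeasure P] [IsFiniteMeasure N]
    (hP : MemLp id (ENNReal.ofReal k) P) (hN : MemLp id (ENNReal.ofReal k) N)
    (hbal : P Set.univ = N Set.univ) (hne : P ≠ N) :
    rieszEnergy k P P + rieszEnergy k N N < 2 * rieszEnergy k P N := by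
  obtain ⟨c, hc_pos, hc⟩ :=
    exists_mul_rieszEnergy_sub_eq_integral_norm_charFun_sub_sq hk hP hN hbal
  have hzero : charFun P 0 = charFun N 0 := by simp [measureReal_def, hbal]
  have hpos : 0 < ∫ ξ, ‖charFun P ξ - charFun N ξ‖ ^ 2 * rieszWeight k ξ := by
    refine integral_mul_norm_rpow_pos (by fun_prop) (fun ξ ↦ sq_nonneg _) (by simp [hzero])
      (fun h ↦ hne (Measure.ext_of_charFun (funext fun ξ ↦ ?_)))
      (integrable_norm_charFun_sub_sq_mul_rieszWeight hk hP hN hbal)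
    simpa [sub_eq_zero] using congrFun h ξ
  rw [← hc] at hpos
  linarith [pos_of_mul_pos_right hpos hc_pos.le]

end Riesz

/-- For `k ∈ (0,2)`, every nonzero compactly supported signed Borel measure on `ℝ` with total
mass zero (written as a difference `P - N` of finite measures with equal total mass) has strictly
negative `|x-y|^k`-energy:
`∫∫ |x-y|^k d(P-N)d(P-N) = ∫∫ dPdP + ∫∫ dNdN - 2∫∫ dPdN < 0`. -/
theorem riesz_energy_neg_of_balanced (k : ℝ) (hk : k ∈ Set.Ioo (0:ℝ) 2)
    (P N : Measure ℝ) [IsFiniteMeasure P] [IsFiniteMeasure N]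
    (hPc : ∃ K : Set ℝ, IsCompact K ∧ P Kᶜ = 0)
    (hNc : ∃ K : Set ℝ, IsCompact K ∧ N Kᶜ = 0)
    (hbal : P Set.univ = N Set.univ) (hne : P ≠ N) :
    (∫ x, ∫ y, |x - y| ^ k ∂P ∂P) + (∫ x, ∫ y, |x - y| ^ k ∂N ∂N)
      < 2 * ∫ x, ∫ y, |x - y| ^ k ∂N ∂P := by
  obtain ⟨K, hK, hPK⟩ := hPc
  obtain ⟨L, hL, hNL⟩ := hNc
  exact riesz_energy_neg_of_balanced_general hk (memLp_id_of_isBounded hK.isBounded hPK _)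
    (memLp_id_of_isBounded hL.isBounded hNL _) hbal hne
end

section
/- For k ∈ (0,1) and x ∈ (0,1): ∫₀¹ sign(x-t) |x-t|^{k-1} (1-t)^{(1-k)/2} t^{-(1+k)/2} (t + (1-k)/2) dt = (π(1-k)/sin((1-k)π/2)) · x. -/
open Real

/-!
Put `a = (1 - k) / 2` and `w = (x - t) ^ 2 / ((x - t) ^ 2 + t (1 - t))`. Up to its sign, the weight
is `1 / t` times the power `-a` of `(x - t) ^ 2 / (t (1 - t)) = w / (1 - w)`. The Möbius involution
which fixes `x` and exchanges `0` and `1` preserves `w` and exchanges the two signs, so it folds the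
integral onto `(0, x)`, where `w` is a decreasing coordinate. For an integrand with rational factor
`A + B / t`, the factors of the two halves combine to `B / (1 - w) - (1 - 2 x) A` times `-dw/dt`,
which leaves a sum of two beta integrals in `w`.
-/

open MeasureTheory Set

section IntervalIntegral

variable {E : Type*} [NormedAddCommGroup E] [NormedSpace ℝ E]

theorem integral_sign_sub_smul {f : ℝ → E} {a b x : ℝ} (hx : x ∈ Icc a b)
    (hf : IntervalIntegrable f volume a b) :
    ∫ t in a..b, Real.sign (x - t) • f t = (∫ t in a..x, f t) + ∫ t in b..x, f t := by
  have hx' : x ∈ uIcc a b := Icc_subset_uIcc hx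
  have left : EqOn f (fun t => Real.sign (x - t) • f t) (uIoo a x) := fun t ht => by
    rw [uIoo_of_le hx.1] at ht
    simp only [Real.sign_of_pos (sub_pos.2 ht.2), one_smul]
  have right : EqOn (fun t => -f t) (fun t => Real.sign (x - t) • f t) (uIoo x b) := fun t ht => by
    rw [uIoo_of_le hx.2] at ht
    simp only [Real.sign_of_neg (sub_neg.2 ht.1), neg_smul, one_smul]
  have hfl := hf.mono_set (uIcc_subset_uIcc_left hx')
  have hfr := hf.mono_set (uIcc_subset_uIcc_right hx')
  rw [← intervalIntegral.integral_add_adjacent_intervals (hfl.congr_uIoo left)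
      (hfr.neg.congr_uIoo right),
    ← intervalIntegral.integral_congr_uIoo left, ← intervalIntegral.integral_congr_uIoo right,
    intervalIntegral.integral_neg, ← intervalIntegral.integral_symm]

end IntervalIntegral

section Beta

theorem ofReal_rpow_mul_one_sub_rpow {t : ℝ} (ht : t ∈ Icc (0 : ℝ) 1) (p q : ℝ) :
    ((t ^ p * (1 - t) ^ q : ℝ) : ℂ) = (t : ℂ) ^ (p : ℂ) * (1 - (t : ℂ)) ^ (q : ℂ) := by
  rw [Complex.ofReal_mul, Complex.ofReal_cpow ht.1, Complex.ofReal_cpow (sub_nonneg.2 ht.2),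
    Complex.ofReal_sub, Complex.ofReal_one]

variable {p q : ℝ}

theorem intervalIntegrable_rpow_mul_one_sub_rpow (hp : -1 < p) (hq : -1 < q) :
    IntervalIntegrable (fun t : ℝ => t ^ p * (1 - t) ^ q) volume 0 1 := by
  have h := Complex.betaIntegral_convergent (u := ((p + 1 : ℝ) : ℂ)) (v := ((q + 1 : ℝ) : ℂ))
    (by rw [Complex.ofReal_re]; linarith) (by rw [Complex.ofReal_re]; linarith)
  rw [intervalIntegrable_iff_integrableOn_Icc_of_le zero_le_one] at h ⊢
  refine IntegrableOn.congr_fun h.re (fun t ht => ?_) measurableSet_Icc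
  have := ofReal_rpow_mul_one_sub_rpow ht p q
  simp only [Complex.ofReal_add, Complex.ofReal_one, add_sub_cancel_right, ← this,
    RCLike.re_to_complex, Complex.ofReal_re]

theorem integral_rpow_mul_one_sub_rpow (hp : -1 < p) (hq : -1 < q) :
    ∫ t in (0 : ℝ)..1, t ^ p * (1 - t) ^ q
      = Gamma (p + 1) * Gamma (q + 1) / Gamma (p + q + 2) := by
  have hbeta : ((∫ t in (0 : ℝ)..1, t ^ p * (1 - t) ^ q : ℝ) : ℂ)
      = Complex.betaIntegral ((p + 1 : ℝ) : ℂ) ((q + 1 : ℝ) : ℂ) := by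
    rw [← intervalIntegral.integral_ofReal]
    refine intervalIntegral.integral_congr fun t ht => ?_
    rw [uIcc_of_le zero_le_one] at ht
    simp only [ofReal_rpow_mul_one_sub_rpow ht, Complex.ofReal_add, Complex.ofReal_one,
      add_sub_cancel_right]
  rw [← Complex.ofReal_re (∫ t in (0 : ℝ)..1, _), hbeta,
    ← ProbabilityTheory.beta_eq_betaIntegralReal _ _ (by linarith) (by linarith),
    ProbabilityTheory.beta, show p + 1 + (q + 1) = p + q + 2 by ring]

theorem intervalIntegrable_inv_sqrt_mul_one_sub_smul_rpow_neg_mul_rpow {a : ℝ}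
    (ha : a ∈ Ioo (0 : ℝ) (1 / 2)) :
    IntervalIntegrable (fun w : ℝ => (√w * (1 - w))⁻¹ • (w ^ (-a) * (1 - w) ^ a)) volume 0 1 := by
  refine (intervalIntegrable_rpow_mul_one_sub_rpow (p := -a - 1 / 2) (q := a - 1)
    (by linarith [ha.2]) (by linarith [ha.1])).congr_uIoo fun w hw => ?_
  rw [uIoo_of_le zero_le_one] at hw
  simp only [rpow_sub hw.1, rpow_sub_one (sub_pos.2 hw.2).ne', sqrt_eq_rpow, smul_eq_mul]
  field_simp

theorem integral_div_one_sub_sub_mul_rpow_neg_mul_one_sub_rpow {a : ℝ} (ha : a ∈ Ioo (0 : ℝ) 1)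
    (b c : ℝ) :
    ∫ w in (0 : ℝ)..1, (b / (1 - w) - c) * (w ^ (-a) * (1 - w) ^ a)
      = (b - a * c) * (π / sin (π * a)) := by
  obtain ⟨ha0, ha1⟩ := ha
  have hsplit : EqOn (fun w : ℝ => (b / (1 - w) - c) * (w ^ (-a) * (1 - w) ^ a))
      (fun w => b * (w ^ (-a) * (1 - w) ^ (a - 1)) - c * (w ^ (-a) * (1 - w) ^ a))
      (Ioo 0 1) := fun w hw => by
    simp only [rpow_sub_one (sub_pos.2 hw.2).ne']
    ring
  rw [intervalIntegral.integral_congr_Ioo_of_le zero_le_one hsplit,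
    intervalIntegral.integral_sub
      ((intervalIntegrable_rpow_mul_one_sub_rpow (by linarith) (by linarith)).const_mul b)
      ((intervalIntegrable_rpow_mul_one_sub_rpow (by linarith) (by linarith)).const_mul c),
    intervalIntegral.integral_const_mul, intervalIntegral.integral_const_mul,
    integral_rpow_mul_one_sub_rpow (by linarith) (by linarith),
    integral_rpow_mul_one_sub_rpow (by linarith) (by linarith),
    ← Gamma_mul_Gamma_one_sub, sub_add_cancel, Gamma_add_one ha0.ne',
    show -a + (a - 1) + 2 = 1 by ring, show -a + a + 2 = 2 by ring, Gamma_one, Gamma_two,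
    neg_add_eq_sub]
  ring

end Beta

section EndpointSwap

/-- The common denominator of `endpointSwap` and `swapInvariant`, equal to
`(x - t) ^ 2 + t * (1 - t)` and written as a convex combination to make its sign visible. -/
def swapDenom (x t : ℝ) : ℝ := x ^ 2 * (1 - t) + (1 - x) ^ 2 * t

/-- The Möbius involution of the unit interval which exchanges `0` and `1` and fixes `x`. -/
noncomputable def endpointSwap (x t : ℝ) : ℝ := x ^ 2 * (1 - t) / swapDenom x t

/-- The coordinate `(x - t) ^ 2 / ((x - t) ^ 2 + t * (1 - t))` on the quotient of the unit interval
by `endpointSwap x`. It equals `1` at both endpoints and `0` at `x`. -/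
noncomputable def swapInvariant (x t : ℝ) : ℝ := (x - t) ^ 2 / swapDenom x t

variable {x t : ℝ}

theorem mul_one_sub_add_mul_pos {u v : ℝ} (hu : 0 < u) (hv : 0 < v) (ht : t ∈ Icc (0 : ℝ) 1) :
    0 < u * (1 - t) + v * t := by
  simpa only [smul_eq_mul, mul_comm, mem_Ioi] using
    convex_Ioi (0 : ℝ) hu hv (sub_nonneg.2 ht.2) ht.1 (sub_add_cancel 1 t)

theorem swapDenom_pos (hx : x ∈ Ioo (0 : ℝ) 1) (ht : t ∈ Icc (0 : ℝ) 1) : 0 < swapDenom x t :=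
  mul_one_sub_add_mul_pos (pow_pos hx.1 2) (pow_pos (sub_pos.2 hx.2) 2) ht

theorem one_sub_swapInvariant (h : swapDenom x t ≠ 0) :
    1 - swapInvariant x t = t * (1 - t) / swapDenom x t := by
  rw [swapInvariant, one_sub_div h, swapDenom]
  ring

theorem swapDenom_endpointSwap (h : swapDenom x t ≠ 0) :
    swapDenom x (endpointSwap x t) = (x * (1 - x)) ^ 2 / swapDenom x t := by
  rw [swapDenom, endpointSwap]
  field_simp
  rw [swapDenom]
  ring

theorem sub_endpointSwap (h : swapDenom x t ≠ 0) :
    x - endpointSwap x t = -(x * (1 - x) * (x - t) / swapDenom x t) := by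
  rw [endpointSwap]
  field_simp
  rw [swapDenom]
  ring

theorem swapInvariant_endpointSwap (hx : x ∈ Ioo (0 : ℝ) 1) (h : swapDenom x t ≠ 0) :
    swapInvariant x (endpointSwap x t) = swapInvariant x t := by
  have hx0 := hx.1.ne'
  have hx1 := (sub_pos.2 hx.2).ne'
  rw [swapInvariant, swapDenom_endpointSwap h, sub_endpointSwap h, swapInvariant]
  field_simp

theorem hasDerivAt_swapDenom (x t : ℝ) : HasDerivAt (swapDenom x) (1 - 2 * x) t := by
  have := (((hasDerivAt_id t).const_sub 1).const_mul (x ^ 2)).add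
    ((hasDerivAt_id t).const_mul ((1 - x) ^ 2))
  exact this.congr_deriv (by ring)

theorem continuous_swapDenom (x : ℝ) : Continuous (swapDenom x) :=
  continuous_iff_continuousAt.2 fun t => (hasDerivAt_swapDenom x t).continuousAt

theorem hasDerivAt_endpointSwap (h : swapDenom x t ≠ 0) :
    HasDerivAt (endpointSwap x) (-(x * (1 - x) / swapDenom x t) ^ 2) t := by
  have := (((hasDerivAt_id t).const_sub 1).const_mul (x ^ 2)).div (hasDerivAt_swapDenom x t) h
  refine this.congr_deriv ?_
  field_simp
  simp only [swapDenom, id]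
  ring

theorem hasDerivAt_swapInvariant (h : swapDenom x t ≠ 0) :
    HasDerivAt (swapInvariant x)
      (-((x - t) * (x * (1 - t) + (1 - x) * t) / swapDenom x t ^ 2)) t := by
  have := (((hasDerivAt_id t).const_sub x).pow 2).div (hasDerivAt_swapDenom x t) h
  refine this.congr_deriv ?_
  rw [← neg_div]
  congr 1
  simp only [swapDenom, id, Pi.pow_apply]
  ring

theorem endpointSwap_pos (hx : x ∈ Ioo (0 : ℝ) 1) (ht : t ∈ Ico (0 : ℝ) 1) :
    0 < endpointSwap x t :=
  div_pos (mul_pos (pow_pos hx.1 2) (sub_pos.2 ht.2)) (swapDenom_pos hx (Ico_subset_Icc_self ht))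

theorem endpointSwap_zero (hx : x ≠ 0) : endpointSwap x 0 = 1 := by
  simp [endpointSwap, swapDenom, hx]

theorem endpointSwap_self (hx : x ∈ Ioo (0 : ℝ) 1) : endpointSwap x x = x := by
  have h := sub_endpointSwap (swapDenom_pos hx (Ioo_subset_Icc_self hx)).ne'
  rw [sub_self, mul_zero, zero_div, neg_zero] at h
  exact (sub_eq_zero.1 h).symm

theorem swapInvariant_zero (hx : x ≠ 0) : swapInvariant x 0 = 1 := by
  simp [swapInvariant, swapDenom, hx]

theorem swapInvariant_self (x : ℝ) : swapInvariant x x = 0 := by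
  simp [swapInvariant]

theorem add_div_sub_deriv_mul_add_div_endpointSwap (hx : x ≠ 0) (ht : t ∈ Ioo (0 : ℝ) 1)
    (h : swapDenom x t ≠ 0) (A B : ℝ) :
    A + B / t - (x * (1 - x) / swapDenom x t) ^ 2 * (A + B / endpointSwap x t)
      = -((x - t) * (x * (1 - t) + (1 - x) * t) / swapDenom x t ^ 2)
        * ((1 - 2 * x) * A - B / (1 - swapInvariant x t)) := by
  have ht0 := ht.1.ne'
  have ht1 := (sub_pos.2 ht.2).ne'
  rw [one_sub_swapInvariant h, endpointSwap]
  field_simp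
  simp only [swapDenom]
  ring

end EndpointSwap

section ChangeOfVariables

variable {E : Type*} [NormedAddCommGroup E] [NormedSpace ℝ E] {x : ℝ}

theorem mem_Ico_zero_one_of_mem_uIcc (hx : x ∈ Ico (0 : ℝ) 1) {t : ℝ} (ht : t ∈ uIcc 0 x) :
    t ∈ Ico (0 : ℝ) 1 := by
  rw [uIcc_of_le hx.1] at ht
  exact ⟨ht.1, ht.2.trans_lt hx.2⟩

theorem swapDenom_ne_zero_of_mem_uIcc (hx : x ∈ Ioo (0 : ℝ) 1) {t : ℝ} (ht : t ∈ uIcc 0 x) :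
    swapDenom x t ≠ 0 :=
  (swapDenom_pos hx (Ico_subset_Icc_self
    (mem_Ico_zero_one_of_mem_uIcc (Ioo_subset_Ico_self hx) ht))).ne'

theorem integral_deriv_smul_comp_endpointSwap (hx : x ∈ Ioo (0 : ℝ) 1) (f : ℝ → E) :
    ∫ t in 0..x, -(x * (1 - x) / swapDenom x t) ^ 2 • f (endpointSwap x t) = ∫ t in 1..x, f t := by
  have hderiv : ∀ t ∈ uIcc 0 x, HasDerivAt (endpointSwap x) _ t := fun t ht =>
    hasDerivAt_endpointSwap (swapDenom_ne_zero_of_mem_uIcc hx ht)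
  have key := intervalIntegral.integral_deriv_smul_comp_of_deriv_nonpos (g := f)
    (HasDerivAt.continuousOn hderiv) (fun t ht => hderiv t (Ioo_subset_Icc_self ht))
    (fun t _ => neg_nonpos.2 (sq_nonneg _))
  rwa [endpointSwap_zero hx.1.ne', endpointSwap_self hx] at key

theorem intervalIntegrable_deriv_smul_comp_endpointSwap_iff (hx : x ∈ Ioo (0 : ℝ) 1)
    (f : ℝ → E) :
    IntervalIntegrable
        (fun t => -(x * (1 - x) / swapDenom x t) ^ 2 • f (endpointSwap x t)) volume 0 x
      ↔ IntervalIntegrable f volume 1 x := by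
  have hderiv : ∀ t ∈ uIcc 0 x, HasDerivAt (endpointSwap x) _ t := fun t ht =>
    hasDerivAt_endpointSwap (swapDenom_ne_zero_of_mem_uIcc hx ht)
  have key := intervalIntegral.integrable_deriv_smul_comp_iff_of_deriv_nonpos (g := f)
    (HasDerivAt.continuousOn hderiv) (fun t ht => hderiv t (Ioo_subset_Icc_self ht))
    (fun t _ => neg_nonpos.2 (sq_nonneg _))
  rwa [endpointSwap_zero hx.1.ne', endpointSwap_self hx] at key

theorem deriv_swapInvariant_nonpos (hx : x ∈ Ico (0 : ℝ) 1) {t : ℝ} (ht : t ∈ uIcc 0 x) :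
    -((x - t) * (x * (1 - t) + (1 - x) * t) / swapDenom x t ^ 2) ≤ 0 := by
  have ht1 := sub_nonneg.2 (mem_Ico_zero_one_of_mem_uIcc hx ht).2.le
  have hx1 := sub_nonneg.2 hx.2.le
  rw [uIcc_of_le hx.1] at ht
  exact neg_nonpos.2 (div_nonneg (mul_nonneg (sub_nonneg.2 ht.2)
    (add_nonneg (mul_nonneg hx.1 ht1) (mul_nonneg hx1 ht.1))) (sq_nonneg _))

theorem integral_deriv_smul_comp_swapInvariant (hx : x ∈ Ioo (0 : ℝ) 1) (f : ℝ → E) :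
    ∫ t in 0..x, -((x - t) * (x * (1 - t) + (1 - x) * t) / swapDenom x t ^ 2)
        • f (swapInvariant x t) = ∫ w in 1..0, f w := by
  have hderiv : ∀ t ∈ uIcc 0 x, HasDerivAt (swapInvariant x) _ t := fun t ht =>
    hasDerivAt_swapInvariant (swapDenom_ne_zero_of_mem_uIcc hx ht)
  have key := intervalIntegral.integral_deriv_smul_comp_of_deriv_nonpos (g := f)
    (HasDerivAt.continuousOn hderiv) (fun t ht => hderiv t (Ioo_subset_Icc_self ht))
    (fun t ht => deriv_swapInvariant_nonpos (Ioo_subset_Ico_self hx) (Ioo_subset_Icc_self ht))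
  rwa [swapInvariant_zero hx.1.ne', swapInvariant_self] at key

theorem intervalIntegrable_deriv_smul_comp_swapInvariant_iff (hx : x ∈ Ioo (0 : ℝ) 1)
    (f : ℝ → E) :
    IntervalIntegrable (fun t => -((x - t) * (x * (1 - t) + (1 - x) * t) / swapDenom x t ^ 2)
        • f (swapInvariant x t)) volume 0 x ↔ IntervalIntegrable f volume 1 0 := by
  have hderiv : ∀ t ∈ uIcc 0 x, HasDerivAt (swapInvariant x) _ t := fun t ht =>
    hasDerivAt_swapInvariant (swapDenom_ne_zero_of_mem_uIcc hx ht)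
  have key := intervalIntegral.integrable_deriv_smul_comp_iff_of_deriv_nonpos (g := f)
    (HasDerivAt.continuousOn hderiv) (fun t ht => hderiv t (Ioo_subset_Icc_self ht))
    (fun t ht => deriv_swapInvariant_nonpos (Ioo_subset_Ico_self hx) (Ioo_subset_Icc_self ht))
  rwa [swapInvariant_zero hx.1.ne', swapInvariant_self] at key

theorem intervalIntegrable_div_smul_comp_swapInvariant (hx : x ∈ Ioo (0 : ℝ) 1) {g : ℝ → E}
    (hg : IntervalIntegrable (fun w => (√w * (1 - w))⁻¹ • g w) volume 0 1) {c : ℝ → ℝ}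
    (hc : ContinuousOn c (uIcc 0 x)) :
    IntervalIntegrable (fun t => (c t / t) • g (swapInvariant x t)) volume 0 x := by
  have hpos : ∀ t ∈ uIcc 0 x, 0 < x * (1 - t) + (1 - x) * t := fun t ht =>
    mul_one_sub_add_mul_pos hx.1 (sub_pos.2 hx.2)
      (Ico_subset_Icc_self (mem_Ico_zero_one_of_mem_uIcc (Ioo_subset_Ico_self hx) ht))
  set φ : ℝ → ℝ := fun t =>
    -(c t * (√(swapDenom x t) * (1 - t) / (x * (1 - t) + (1 - x) * t))) with hφ_def
  have hφ : ContinuousOn φ (uIcc 0 x) := by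
    have hD := (continuous_swapDenom x).continuousOn (s := uIcc 0 x)
    exact (hc.mul (ContinuousOn.div (by fun_prop) (by fun_prop) fun t ht => (hpos t ht).ne')).neg
  refine (((intervalIntegrable_deriv_smul_comp_swapInvariant_iff hx _).2 hg.symm).continuousOn_smul
    hφ).congr_uIoo fun t ht => ?_
  have hv := hpos t (Ioo_subset_Icc_self ht)
  rw [uIoo_of_le hx.1.le] at ht
  have ht0 := ht.1
  have hxt : 0 < x - t := sub_pos.2 ht.2
  have ht1 : 0 < 1 - t := sub_pos.2 (ht.2.trans hx.2)
  have hD := swapDenom_pos hx ⟨ht0.le, (ht.2.trans hx.2).le⟩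
  have := sqrt_pos.2 hD
  have hsqrt : √(swapInvariant x t) = (x - t) / √(swapDenom x t) := by
    rw [swapInvariant, sqrt_div (sq_nonneg _), sqrt_sq hxt.le]
  simp only [smul_smul, hsqrt, one_sub_swapInvariant hD.ne', hφ_def]
  generalize x * (1 - t) + (1 - x) * t = v at hv ⊢
  congr 1
  field_simp
  rw [sq_sqrt hD.le]

theorem intervalIntegrable_add_div_smul_comp_swapInvariant (hx : x ∈ Ioo (0 : ℝ) 1) {g : ℝ → E}
    (hg : IntervalIntegrable (fun w => (√w * (1 - w))⁻¹ • g w) volume 0 1) (A B : ℝ) :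
    IntervalIntegrable (fun t => (A + B / t) • g (swapInvariant x t)) volume 0 1 := by
  have left : IntervalIntegrable (fun t => (A + B / t) • g (swapInvariant x t)) volume 0 x := by
    have hc : ContinuousOn (fun t => A * t + B) (uIcc 0 x) := by fun_prop
    refine (intervalIntegrable_div_smul_comp_swapInvariant hx hg hc).congr_uIoo fun t ht => ?_
    rw [uIoo_of_le hx.1.le] at ht
    simp only [add_div, mul_div_cancel_right₀ A ht.1.ne']
  have right : IntervalIntegrable (fun t => (A + B / t) • g (swapInvariant x t)) volume 1 x := by
    rw [← intervalIntegrable_deriv_smul_comp_endpointSwap_iff hx]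
    have hD : ∀ t ∈ uIcc 0 x, swapDenom x t ≠ 0 := fun t => swapDenom_ne_zero_of_mem_uIcc hx
    have hswap : ∀ t ∈ uIcc 0 x, endpointSwap x t ≠ 0 := fun t ht =>
      (endpointSwap_pos hx (mem_Ico_zero_one_of_mem_uIcc (Ioo_subset_Ico_self hx) ht)).ne'
    have hD_cont := (continuous_swapDenom x).continuousOn (s := uIcc 0 x)
    have hswap_cont : ContinuousOn (endpointSwap x) (uIcc 0 x) :=
      HasDerivAt.continuousOn fun t ht => hasDerivAt_endpointSwap (hD t ht)
    have hc : ContinuousOn (fun t => t * (-(x * (1 - x) / swapDenom x t) ^ 2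
        * (A + B / endpointSwap x t))) (uIcc 0 x) :=
      continuousOn_id.mul (((continuousOn_const.div hD_cont hD).pow 2).neg.mul
        (continuousOn_const.add (continuousOn_const.div hswap_cont hswap)))
    refine (intervalIntegrable_div_smul_comp_swapInvariant hx hg hc).congr_uIoo fun t ht => ?_
    have hDt := hD t (Ioo_subset_Icc_self ht)
    rw [uIoo_of_le hx.1.le] at ht
    simp only [swapInvariant_endpointSwap hx hDt, smul_smul, mul_div_cancel_left₀ _ ht.1.ne']
  exact left.trans right.symm

theorem integral_sign_sub_smul_add_div_smul_comp_swapInvariant (hx : x ∈ Ioo (0 : ℝ) 1)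
    {g : ℝ → E} (hg : IntervalIntegrable (fun w => (√w * (1 - w))⁻¹ • g w) volume 0 1)
    (A B : ℝ) :
    ∫ t in 0..1, Real.sign (x - t) • (A + B / t) • g (swapInvariant x t)
      = ∫ w in 0..1, (B / (1 - w) - (1 - 2 * x) * A) • g w := by
  set f : ℝ → E := fun t => (A + B / t) • g (swapInvariant x t) with hf_def
  have hf := intervalIntegrable_add_div_smul_comp_swapInvariant hx hg A B
  have hx' : x ∈ uIcc 0 1 := Icc_subset_uIcc (Ioo_subset_Icc_self hx)
  have hleft : IntervalIntegrable f volume 0 x := hf.mono_set (uIcc_subset_uIcc_left hx')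
  have hright : IntervalIntegrable f volume 1 x := (hf.mono_set (uIcc_subset_uIcc_right hx')).symm
  calc
    _ = (∫ t in 0..x, f t) + ∫ t in 1..x, f t :=
      integral_sign_sub_smul (Ioo_subset_Icc_self hx) hf
    _ = ∫ t in 0..x, (f t + -(x * (1 - x) / swapDenom x t) ^ 2 • f (endpointSwap x t)) := by
      rw [← integral_deriv_smul_comp_endpointSwap hx, ← intervalIntegral.integral_add hleft
        ((intervalIntegrable_deriv_smul_comp_endpointSwap_iff hx f).2 hright)]
    _ = ∫ t in 0..x, -((x - t) * (x * (1 - t) + (1 - x) * t) / swapDenom x t ^ 2)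
          • ((1 - 2 * x) * A - B / (1 - swapInvariant x t)) • g (swapInvariant x t) := by
      refine intervalIntegral.integral_congr_Ioo_of_le hx.1.le fun t ht => ?_
      have ht01 : t ∈ Ioo (0 : ℝ) 1 := ⟨ht.1, ht.2.trans hx.2⟩
      have hD := (swapDenom_pos hx (Ioo_subset_Icc_self ht01)).ne'
      simp only [hf_def, swapInvariant_endpointSwap hx hD, smul_smul,
        ← add_div_sub_deriv_mul_add_div_endpointSwap hx.1.ne' ht01 hD]
      rw [← add_smul, neg_mul, ← sub_eq_add_neg]
    _ = ∫ w in 1..0, ((1 - 2 * x) * A - B / (1 - w)) • g w :=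
      integral_deriv_smul_comp_swapInvariant hx fun w => ((1 - 2 * x) * A - B / (1 - w)) • g w
    _ = _ := by
      rw [intervalIntegral.integral_symm, ← intervalIntegral.integral_neg]
      simp only [← neg_smul, neg_sub]

end ChangeOfVariables

theorem abs_sub_rpow_mul_rpow_mul_rpow {x t : ℝ} (hx : x ∈ Ioo (0 : ℝ) 1) (ht : t ∈ Ioo (0 : ℝ) 1)
    (a : ℝ) :
    |x - t| ^ (-(2 * a)) * (1 - t) ^ a * t ^ a
      = swapInvariant x t ^ (-a) * (1 - swapInvariant x t) ^ a := by
  have hD := swapDenom_pos hx (Ioo_subset_Icc_self ht)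
  have ht0 := ht.1.le
  have ht1 := (sub_pos.2 ht.2).le
  have := rpow_pos_of_pos hD a
  rw [one_sub_swapInvariant hD.ne', swapInvariant, div_rpow (sq_nonneg _) hD.le,
    div_rpow (mul_nonneg ht0 ht1) hD.le, mul_rpow ht0 ht1, rpow_neg hD.le, ← sq_abs,
    ← rpow_natCast_mul (abs_nonneg _), Nat.cast_ofNat, mul_neg]
  field_simp

theorem singular_integral_jacobi_linear_general {k x : ℝ} (hk : k ∈ Ioo (0 : ℝ) 1)
    (hx : x ∈ Ioo (0 : ℝ) 1) (A B : ℝ) :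
    ∫ t in (0 : ℝ)..1, Real.sign (x - t) * |x - t| ^ (k - 1) * (1 - t) ^ ((1 - k) / 2)
        * t ^ (-(1 + k) / 2) * (A * t + B)
      = (B - (1 - k) / 2 * (1 - 2 * x) * A) * (π / sin ((1 - k) * π / 2)) := by
  obtain ⟨a, rfl⟩ : ∃ a, k = 1 - 2 * a := ⟨(1 - k) / 2, by ring⟩
  have ha : a ∈ Ioo (0 : ℝ) (1 / 2) := ⟨by linarith [hk.2], by linarith [hk.1]⟩
  calc
    _ = ∫ t in (0 : ℝ)..1, Real.sign (x - t) • (A + B / t)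
          • (swapInvariant x t ^ (-a) * (1 - swapInvariant x t) ^ a) := by
      refine intervalIntegral.integral_congr_Ioo_of_le zero_le_one fun t ht => ?_
      have ht0 := ht.1.ne'
      simp only [← abs_sub_rpow_mul_rpow_mul_rpow hx ht, smul_eq_mul,
        show 1 - 2 * a - 1 = -(2 * a) by ring, show (1 - (1 - 2 * a)) / 2 = a by ring,
        show -(1 + (1 - 2 * a)) / 2 = a - 1 by ring, rpow_sub_one ht0]
      field_simp
    _ = ∫ w in (0 : ℝ)..1, (B / (1 - w) - (1 - 2 * x) * A) * (w ^ (-a) * (1 - w) ^ a) :=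
      integral_sign_sub_smul_add_div_smul_comp_swapInvariant hx
        (intervalIntegrable_inv_sqrt_mul_one_sub_smul_rpow_neg_mul_rpow ha) A B
    _ = (B - a * ((1 - 2 * x) * A)) * (π / sin (π * a)) :=
      integral_div_one_sub_sub_mul_rpow_neg_mul_one_sub_rpow ⟨ha.1, by linarith [ha.2]⟩ _ _
    _ = _ := by
      rw [show (1 - (1 - 2 * a)) * π / 2 = π * a by ring]
      ring

theorem singular_integral_jacobi_linear (k x : ℝ) (hk : k ∈ Set.Ioo (0:ℝ) 1)
    (hx : x ∈ Set.Ioo (0:ℝ) 1) :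
    (∫ t in (0:ℝ)..1, Real.sign (x - t) * |x - t| ^ (k - 1)
        * (1 - t) ^ ((1 - k) / 2) * t ^ (-(1 + k) / 2) * (t + (1 - k) / 2))
      = (π * (1 - k) / Real.sin ((1 - k) * π / 2)) * x := by
  simpa only [one_mul] using
    (singular_integral_jacobi_linear_general hk hx 1 ((1 - k) / 2)).trans (by ring)
end
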